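/- The pair X(z) = (℘'(z) + √3)/(2√3 ℘(z)), Y(z) = (℘'(−z) + √3)/(2√3 ℘(−z)) satisfies X(z)³ + Y(z)³ = 1 for all z where both are defined; i.e. it uniformizes the Fermat cubic X³ + Y³ = 1. -/

import Mathlib

open Complex

noncomputable section

/-- `e^{πi/3}`. -/
def τ : ℂ := Complex.exp (Real.pi * Complex.I / 3)

/-- The point `mϖ + n e^{πi/3} ϖ` of the hexagonal lattice with real period `ϖ`. -/
def hexPt (ϖ : ℝ) (p : ℤ × ℤ) : ℂ := p.1 * ϖ + p.2 * τ * ϖ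

/-- The hexagonal lattice `𝕋 = ℤϖ + ℤ e^{πi/3} ϖ`. -/
def hexLattice (ϖ : ℝ) : Set ℂ := Set.range (hexPt ϖ)

/-- The real fundamental period `ϖ = Γ(1/3)³/(2π)`. -/
def ϖ₀ : ℝ := (Real.Gamma (1/3))^3 / (2 * Real.pi)

/-- The Weierstrass `℘`-function of the hexagonal lattice `𝕋 = ℤϖ₀ + ℤ e^{πi/3} ϖ₀`,
i.e. the `℘`-function with invariants `g₂ = 0`, `g₃ = 1`. -/
def wp (z : ℂ) : ℂ :=
  1 / z ^ 2 + ∑' p : {p : ℤ × ℤ // p ≠ 0}, (1 / (z - hexPt ϖ₀ p) ^ 2 - 1 / (hexPt ϖ₀ p) ^ 2)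

/-- The Weierstrass `σ`-function of the hexagonal lattice with real period `ϖ`. -/
def wSigma (ϖ : ℝ) (z : ℂ) : ℂ :=
  z * ∏' p : {p : ℤ × ℤ // p ≠ 0},
    ((1 - z / hexPt ϖ p) * Complex.exp (z / hexPt ϖ p + z ^ 2 / (2 * (hexPt ϖ p) ^ 2)))

/-- The Weierstrass `ζ`-function of the hexagonal lattice with real period `ϖ`. -/
def wZeta (ϖ : ℝ) (z : ℂ) : ℂ :=
  1 / z + ∑' p : {p : ℤ × ℤ // p ≠ 0},
    (1 / (z - hexPt ϖ p) + 1 / hexPt ϖ p + z / (hexPt ϖ p) ^ 2)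

/-! Modulo `℘' ^ 2 = 4 * ℘ ^ 3 - 1`, and since `℘` is even and `℘'` odd, `X ^ 3 + Y ^ 3 = 1` is an
algebraic identity; so the content is that the hexagonal lattice with real period `ϖ₀` has `g₂ = 0`
and `g₃ = 1`. Invariance of the lattice under `τ` gives `g₂ = 0`. At the centre of the triangle
`0, ϖ, τϖ`, the rotation by `τ ^ 2` gives `℘ = 0` and the reflection `z ↦ ϖ - conj z` makes `℘'`
purely imaginary, so `g₃ = -℘' ^ 2 ≥ 0`. Were `g₃ = 0`, then `℘` would vanish at the half periods,
the zeros of `℘'`, and comparing orders there in `℘' ^ 2 = 4 * ℘ ^ 3` would produce a pole. On the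
real half period `(0, ϖ / 2)` the substitution `u = g₃ / (4 * ℘ ^ 3)` gives
`B(1/6, 1/2) = 3 * (g₃ / 4) ^ (1/6) * ϖ`, while the duplication and reflection formulas for `Γ` give
`B(1/6, 1/2) = 3 * (1/4) ^ (1/6) * ϖ₀`. Comparing the two at `ϖ = ϖ₀` forces `g₃ = 1`.
-/

section RealIntegrals

open Filter Topology Set MeasureTheory

lemma setIntegral_Ioo_deriv_smul_comp {E : Type*} [NormedAddCommGroup E] [NormedSpace ℝ E]
    {u u' : ℝ → ℝ} {φ : ℝ → E} {a b c d : ℝ} (hab : a < b)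
    (hu : ∀ x ∈ Ioo a b, HasDerivAt u (u' x) x) (hu' : ∀ x ∈ Ioo a b, 0 ≤ u' x)
    (ha : Tendsto u (𝓝[>] a) (𝓝 c)) (hb : Tendsto u (𝓝[<] b) (𝓝 d)) :
    ∫ x in Ioo a b, u' x • φ (u x) = ∫ t in Ioo c d, φ t := by
  have cont : ContinuousOn u (Ioo a b) := fun x hx => (hu x hx).continuousAt.continuousWithinAt
  have extend_eq := extendFrom_extends cont
  have extend_deriv : ∀ x ∈ Ioo a b, HasDerivAt (extendFrom (Ioo a b) u) (u' x) x := fun x hx =>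
    (hu x hx).congr_of_eventuallyEq ((isOpen_Ioo.eventually_mem hx).mono extend_eq)
  have key := integral_Icc_deriv_smul_of_deriv_nonneg (g := φ)
    (continuousOn_Icc_extendFrom_Ioo cont ha hb) extend_deriv hu' hab.le
  rw [eq_lim_at_left_extendFrom_Ioo hab ha, eq_lim_at_right_extendFrom_Ioo hab hb,
    integral_Icc_eq_integral_Ioo, integral_Icc_eq_integral_Ioo] at key
  rw [← key]
  exact setIntegral_congr_fun measurableSet_Ioo fun x hx => by simp only [extend_eq x hx]

lemma setIntegral_Ioo_rpow_mul_one_sub_rpow {a b : ℝ} (ha : 0 < a) (hb : 0 < b) :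
    ∫ t in Ioo (0 : ℝ) 1, t ^ (a - 1) * (1 - t) ^ (b - 1) = ProbabilityTheory.beta a b := by
  rw [ProbabilityTheory.beta_eq_betaIntegralReal a b ha hb, betaIntegral,
    intervalIntegral.integral_of_le zero_le_one, integral_Ioc_eq_integral_Ioo]
  rw [← ofReal_re (∫ t in Ioo (0 : ℝ) 1, t ^ (a - 1) * (1 - t) ^ (b - 1)),
    ← integral_complex_ofReal]
  congr 1
  refine setIntegral_congr_fun measurableSet_Ioo fun t ht => ?_
  simp only [ofReal_mul, ofReal_cpow ht.1.le, ofReal_cpow (sub_pos.2 ht.2).le, ofReal_sub,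
    ofReal_one]

/-- If `m ^ 2 = 4 * (F ^ 3 - k)` and `F' = -m`, then `u = k / F ^ 3` has `u' = 3 * k * m / F ^ 4`
and `1 - u = m ^ 2 / (4 * F ^ 3)`. -/
lemma beta_integrand_mul_deriv {k F m : ℝ} (hk : 0 < k) (hF : 0 < F) (hm : 0 < m) :
    3 * k * m / F ^ 4 *
      ((k / F ^ 3) ^ (1 / 6 - 1 : ℝ) * (m ^ 2 / (4 * F ^ 3)) ^ (1 / 2 - 1 : ℝ)) =
      6 * k ^ (1 / 6 : ℝ) := by
  have k_rpow : (k / F ^ 3) ^ (1 / 6 - 1 : ℝ) = k ^ (1 / 6 : ℝ) / k * F ^ (5 / 2 : ℝ) := by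
    rw [Real.div_rpow hk.le (by positivity), Real.rpow_sub_one hk.ne', ← Real.rpow_natCast F,
      ← Real.rpow_mul hF.le, div_eq_mul_inv _ (F ^ _), ← Real.rpow_neg hF.le]
    norm_num
  have m_rpow : (m ^ 2 / (4 * F ^ 3)) ^ (1 / 2 - 1 : ℝ) = 2 * F ^ (3 / 2 : ℝ) / m := by
    have sq : m ^ 2 / (4 * F ^ 3) = (m / (2 * F ^ (3 / 2 : ℝ))) ^ 2 := by
      have F_pow : (F ^ (3 / 2 : ℝ)) ^ 2 = F ^ 3 := by
        rw [← Real.rpow_mul_natCast hF.le, ← Real.rpow_natCast F]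
        norm_num
      rw [div_pow, mul_pow, F_pow]
      norm_num
    rw [sq, ← Real.rpow_natCast, ← Real.rpow_mul (by positivity)]
    norm_num [Real.rpow_neg_one]
  have F_rpow : F ^ (5 / 2 : ℝ) * F ^ (3 / 2 : ℝ) = F ^ 4 := by
    rw [← Real.rpow_add hF, ← Real.rpow_natCast F]
    norm_num
  rw [k_rpow, m_rpow]
  field_simp
  linear_combination 6 * F_rpow

lemma beta_one_sixth_one_half :
    ProbabilityTheory.beta (1 / 6) (1 / 2) = 3 * (1 / 4 : ℝ) ^ (1 / 6 : ℝ) * ϖ₀ := by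
  have duplication := Real.Gamma_mul_Gamma_add_half (1 / 6)
  have reflection := Real.Gamma_mul_Gamma_one_sub (1 / 3)
  have two_thirds : (1 / 6 + 1 / 2 : ℝ) = 1 - 1 / 3 := by norm_num
  have one_third : (2 * (1 / 6) : ℝ) = 1 / 3 := by norm_num
  have two_rpow : (2 : ℝ) ^ (1 - 1 / 3 : ℝ) = 2 * (1 / 4 : ℝ) ^ (1 / 6 : ℝ) := by
    rw [show (1 / 4 : ℝ) = 2 ^ (-2 : ℝ) by norm_num [Real.rpow_neg], ← Real.rpow_mul two_pos.le,
      sub_eq_add_neg, Real.rpow_add two_pos, Real.rpow_one]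
    norm_num
  rw [two_thirds, one_third, two_rpow] at duplication
  rw [mul_one_div, Real.sin_pi_div_three] at reflection
  rw [ProbabilityTheory.beta, two_thirds, Real.Gamma_one_half_eq, ϖ₀]
  have b_pos : 0 < Real.Gamma (1 - 1 / 3) := Real.Gamma_pos_of_pos (by norm_num)
  have pi_pos := Real.pi_pos
  have sq_pi : √Real.pi ^ 2 = Real.pi := Real.sq_sqrt pi_pos.le
  have sq_three : √(3 : ℝ) ^ 2 = 3 := Real.sq_sqrt three_pos.le
  generalize Real.Gamma (1 / 6) = a, Real.Gamma (1 - 1 / 3) = b, Real.Gamma (1 / 3) = c,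
    (1 / 4 : ℝ) ^ (1 / 6 : ℝ) = k at *
  have reflection_sq : 3 * (c * b) ^ 2 = 4 * Real.pi ^ 2 := by
    rw [reflection]
    field_simp
    rw [sq_three]
    norm_num
  rw [div_eq_iff b_pos.ne', mul_div_assoc', div_mul_eq_mul_div, eq_div_iff (by positivity)]
  refine mul_right_cancel₀ b_pos.ne' ?_
  linear_combination 2 * Real.pi * √Real.pi * duplication + 4 * Real.pi * c * k * sq_pi
    - c * k * reflection_sq

lemma hasDerivAt_const_div_pow_three {f : ℝ → ℝ} {k m x : ℝ} (hf : HasDerivAt f m x)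
    (h0 : f x ≠ 0) : HasDerivAt (fun y => k / f y ^ 3) (3 * k * -m / f x ^ 4) x := by
  refine ((hasDerivAt_const x k).fun_div (hf.fun_pow 3) (pow_ne_zero 3 h0)).congr_deriv ?_
  field_simp
  ring

lemma beta_eq_six_mul_of_deriv_sq_eq {f f' : ℝ → ℝ} {T g : ℝ} (hT : 0 < T) (hg : 0 < g)
    (hf : ∀ x ∈ Ioo 0 T, HasDerivAt f (f' x) x)
    (ode : ∀ x ∈ Ioo 0 T, f' x ^ 2 = 4 * f x ^ 3 - g)
    (hneg : ∀ x ∈ Ioo 0 T, f' x < 0) (hf_zero : Tendsto f (𝓝[>] 0) atTop)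
    (hf'_T : Tendsto f' (𝓝[<] T) (𝓝 0)) :
    ProbabilityTheory.beta (1 / 6) (1 / 2) = 6 * (g / 4) ^ (1 / 6 : ℝ) * T := by
  set u : ℝ → ℝ := fun x => g / 4 / f x ^ 3 with u_def
  set u' : ℝ → ℝ := fun x => 3 * (g / 4) * -f' x / f x ^ 4
  have f_pos : ∀ x ∈ Ioo 0 T, 0 < f x := fun x hx =>
    (Odd.pow_pos_iff (by decide : Odd 3)).1 (by nlinarith [ode x hx, sq_nonneg (f' x)])
  have u_deriv : ∀ x ∈ Ioo 0 T, HasDerivAt u (u' x) x := fun x hx =>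
    hasDerivAt_const_div_pow_three (hf x hx) (f_pos x hx).ne'
  have u'_nonneg : ∀ x ∈ Ioo 0 T, 0 ≤ u' x := fun x hx => by
    have := f_pos x hx
    have := neg_pos.2 (hneg x hx)
    positivity
  have u_zero : Tendsto u (𝓝[>] 0) (𝓝 0) :=
    ((tendsto_pow_atTop three_ne_zero).comp hf_zero).const_div_atTop _
  have u_T : Tendsto u (𝓝[<] T) (𝓝 1) := by
    have lim : Tendsto (fun x => g / (f' x ^ 2 + g)) (𝓝[<] T) (𝓝 (g / (0 ^ 2 + g))) :=
      tendsto_const_nhds.div ((hf'_T.pow 2).add_const g) (by simpa using hg.ne')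
    rw [zero_pow two_ne_zero, zero_add, div_self hg.ne'] at lim
    refine lim.congr' ?_
    filter_upwards [Ioo_mem_nhdsLT hT] with x hx
    simp only [ode x hx, sub_add_cancel, u_def, div_div]
  have integrand : ∀ x ∈ Ioo 0 T,
      u' x • (u x ^ (1 / 6 - 1 : ℝ) * (1 - u x) ^ (1 / 2 - 1 : ℝ)) = 6 * (g / 4) ^ (1 / 6 : ℝ) := by
    intro x hx
    have f_ne := (f_pos x hx).ne'
    have one_sub_u : 1 - u x = (-f' x) ^ 2 / (4 * f x ^ 3) := by
      rw [neg_sq, ode x hx, u_def]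
      field_simp
    rw [one_sub_u]
    exact beta_integrand_mul_deriv (by positivity) (f_pos x hx) (neg_pos.2 (hneg x hx))
  rw [← setIntegral_Ioo_rpow_mul_one_sub_rpow (by norm_num) (by norm_num),
    ← setIntegral_Ioo_deriv_smul_comp hT u_deriv u'_nonneg u_zero u_T,
    setIntegral_congr_fun measurableSet_Ioo integrand]
  simp [hT.le, mul_comm]

lemma deriv_neg_of_deriv_sq_eq {f f' : ℝ → ℝ} {a b g : ℝ} (hg : g ≠ 0)
    (hf' : ∀ x ∈ Ioc a b, HasDerivAt f' (6 * f x ^ 2) x)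
    (ode : ∀ x ∈ Ioo a b, f' x ^ 2 = 4 * f x ^ 3 - g) (hb : f' b = 0) :
    ∀ x ∈ Ioo a b, f' x < 0 := by
  intro x hx
  have monotone : MonotoneOn f' (Ioc a b) := by
    refine monotoneOn_of_deriv_nonneg (convex_Ioc a b)
      (fun y hy => (hf' y hy).continuousAt.continuousWithinAt)
      (fun y hy => (hf' y (interior_subset hy)).differentiableAt.differentiableWithinAt)
      fun y hy => ?_
    rw [(hf' y (interior_subset hy)).deriv]
    positivity
  have nonpos : ∀ y ∈ Ioo a b, f' y ≤ 0 := fun y hy =>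
    hb ▸ monotone (Ioo_subset_Ioc_self hy) (right_mem_Ioc.2 (hx.1.trans hx.2)) hy.2.le
  refine (nonpos x hx).lt_of_ne fun f'_zero => hg ?_
  have max : IsLocalMax f' x := by
    filter_upwards [isOpen_Ioo.mem_nhds hx] with y hy
    exact (nonpos y hy).trans_eq f'_zero.symm
  have f_zero : f x = 0 := by
    simpa using max.hasDerivAt_eq_zero (hf' x (Ioo_subset_Ioc_self hx))
  simpa [f'_zero, f_zero] using ode x hx

end RealIntegrals

lemma div_pow_three_add_div_pow_three_eq_one {K : Type*} [Field K] {s P Q : K}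
    (h2 : (2 : K) ≠ 0) (hs : s ≠ 0) (hP : P ≠ 0) (hs_sq : s ^ 2 = 3)
    (hQ : Q ^ 2 = 4 * P ^ 3 - 1) :
    ((Q + s) / (2 * s * P)) ^ 3 + ((-Q + s) / (2 * s * P)) ^ 3 = 1 := by
  rw [div_pow, div_pow, ← add_div,
    div_eq_one_iff_eq (pow_ne_zero 3 (mul_ne_zero (mul_ne_zero h2 hs) hP))]
  linear_combination 6 * s * hQ + (2 * s - 8 * s * P ^ 3) * hs_sq

section MeromorphicOrder

open Filter Topology

/-- Comparing orders in `f' ^ 2 = c * f ^ 3` gives `2 * (n - 1) = 3 * n`. -/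
lemma meromorphicOrderAt_eq_neg_two_of_deriv_sq_eq {f : ℂ → ℂ} {c w : ℂ} (hc : c ≠ 0)
    (hf : MeromorphicAt f w) (ode : ∀ᶠ z in 𝓝[≠] w, deriv f z ^ 2 = c * f z ^ 3)
    (h_zero : meromorphicOrderAt f w ≠ 0) (h_top : meromorphicOrderAt f w ≠ ⊤) :
    meromorphicOrderAt f w = (-2 : ℤ) := by
  lift meromorphicOrderAt f w to ℤ using h_top with n hn
  have n_ne : (n : ℂ) ≠ 0 := by exact_mod_cast h_zero
  have order_c : meromorphicOrderAt (fun _ : ℂ => c) w = 0 := by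
    rw [meromorphicOrderAt_const, if_neg hc]
  have orders := meromorphicOrderAt_congr
    (show deriv f ^ 2 =ᶠ[𝓝[≠] w] (fun _ => c) * f ^ 3 from ode)
  rw [meromorphicOrderAt_pow hf.deriv, meromorphicOrderAt_mul (.const c w) (hf.pow 3),
    meromorphicOrderAt_pow hf, order_c, meromorphicOrderAt_deriv_eq_sub_one n_ne hn.symm,
    ← hn, zero_add] at orders
  have : 2 * (n - 1) = 3 * n := WithTop.coe_injective <| by
    rw [WithTop.coe_mul, WithTop.coe_mul]
    exact orders
  rw [show n = -2 by lia]

end MeromorphicOrder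

section Weierstrass

open Filter Topology Set ComplexConjugate
open scoped PeriodPair

variable {L : PeriodPair}

lemma hasDerivAt_weierstrassP {z : ℂ} (hz : z ∉ L.lattice) :
    HasDerivAt ℘[L] (℘'[L] z) z := by
  rw [← L.deriv_weierstrassP]
  exact (L.analyticOnNhd_weierstrassP z hz).differentiableAt.hasDerivAt

lemma eventually_notMem_lattice {z : ℂ} (hz : z ∉ L.lattice) : ∀ᶠ w in 𝓝 z, w ∉ L.lattice :=
  L.isClosed_lattice.isOpen_compl.eventually_mem hz

lemma meromorphicOrderAt_weierstrassP_ne_top (z : ℂ) : meromorphicOrderAt ℘[L] z ≠ ⊤ :=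
  L.meromorphic_weierstrassP.meromorphicOn.meromorphicOrderAt_ne_top_of_isPreconnected
    isPreconnected_univ (mem_univ 0) (mem_univ z) (by simp [L.order_weierstrassP 0 (zero_mem _)])

lemma meromorphicOrderAt_derivWeierstrassP_ne_top (z : ℂ) : meromorphicOrderAt ℘'[L] z ≠ ⊤ := by
  have order_zero : meromorphicOrderAt ℘'[L] 0 = ((-2 - 1 : ℤ) : WithTop ℤ) := by
    rw [← L.deriv_weierstrassP]
    exact meromorphicOrderAt_deriv_eq_sub_one (by norm_num) (L.order_weierstrassP 0 (zero_mem _))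
  exact L.meromorphic_derivWeierstrassP.meromorphicOn.meromorphicOrderAt_ne_top_of_isPreconnected
    isPreconnected_univ (mem_univ 0) (mem_univ z) (order_zero ▸ WithTop.coe_ne_top)

/-- The differentiated cubic relation carries a factor `℘'`, which vanishes only at isolated
points; continuity then covers those points as well. -/
lemma deriv_derivWeierstrassP {z : ℂ} (hz : z ∉ L.lattice) :
    deriv ℘'[L] z = 6 * ℘[L] z ^ 2 - L.g₂ / 2 := by
  have cancel : ∀ w ∉ L.lattice, ℘'[L] w ≠ 0 → deriv ℘'[L] w = 6 * ℘[L] w ^ 2 - L.g₂ / 2 := by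
    intro w hw hw'
    have lhs := ((L.analyticOnNhd_derivWeierstrassP w hw).differentiableAt.hasDerivAt).fun_pow 2
    have rhs := (((hasDerivAt_weierstrassP hw).fun_pow 3).const_mul 4).fun_sub
      ((hasDerivAt_weierstrassP hw).const_mul L.g₂) |>.sub_const L.g₃
    have sq_eq := (eventually_notMem_lattice hw).mono L.derivWeierstrassP_sq
    have derivs := lhs.unique (rhs.congr_of_eventuallyEq sq_eq)
    refine mul_left_cancel₀ hw' ?_
    simp only [Nat.cast_ofNat, Nat.add_one_sub_one, pow_one] at derivs
    linear_combination derivs / 2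
  have off_z : deriv ℘'[L] =ᶠ[𝓝[≠] z] fun w => 6 * ℘[L] w ^ 2 - L.g₂ / 2 := by
    filter_upwards [(eventually_notMem_lattice hz).filter_mono nhdsWithin_le_nhds,
      (meromorphicOrderAt_ne_top_iff_eventually_ne_zero (L.meromorphic_derivWeierstrassP z)).1
        (meromorphicOrderAt_derivWeierstrassP_ne_top z)] with w hw hw'
    exact cancel w hw hw'
  have cont_lhs : ContinuousAt (deriv ℘'[L]) z :=
    (L.analyticOnNhd_derivWeierstrassP z hz).deriv.continuousAt
  have cont_rhs : ContinuousAt (fun w => 6 * ℘[L] w ^ 2 - L.g₂ / 2) z :=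
    (((hasDerivAt_weierstrassP hz).continuousAt.pow 2).const_mul 6).sub continuousAt_const
  exact ((cont_lhs.eventuallyEq_nhds_iff_eventuallyEq_nhdsNE cont_rhs).1 off_z).eq_of_nhds

lemma hasDerivAt_derivWeierstrassP {z : ℂ} (hz : z ∉ L.lattice) :
    HasDerivAt ℘'[L] (6 * ℘[L] z ^ 2 - L.g₂ / 2) z := by
  rw [← deriv_derivWeierstrassP hz]
  exact (L.analyticOnNhd_derivWeierstrassP z hz).differentiableAt.hasDerivAt

lemma derivWeierstrassP_eq_zero_of_two_mul_mem {w : ℂ} (hw : 2 * w ∈ L.lattice) :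
    ℘'[L] w = 0 := by
  have periodic := L.derivWeierstrassP_sub_coe w ⟨2 * w, hw⟩
  simp only [show w - 2 * w = -w by ring, L.derivWeierstrassP_neg] at periodic
  linear_combination -periodic / 2

lemma tendsto_re_weierstrassP_atTop :
    Tendsto (fun x : ℝ => (℘[L] x).re) (𝓝[>] 0) atTop := by
  have regular : Tendsto (fun x : ℝ => (L.weierstrassPExcept 0 x).re) (𝓝[>] 0)
      (𝓝 (L.weierstrassPExcept 0 0).re) :=
    (continuous_re.tendsto _).comp <|
      (L.analyticAt_weierstrassPExcept 0).continuousAt.tendsto.comp <|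
        (continuous_ofReal.tendsto' 0 0 ofReal_zero).mono_left nhdsWithin_le_nhds
  have pole : Tendsto (fun x : ℝ => x⁻¹ ^ 2) (𝓝[>] 0) atTop :=
    (tendsto_pow_atTop two_ne_zero).comp tendsto_inv_nhdsGT_zero
  refine (regular.add_atTop pole).congr fun x => ?_
  have split : ℘[L] x = L.weierstrassPExcept 0 x + ((x⁻¹ ^ 2 : ℝ) : ℂ) := by
    simpa using (L.weierstrassPExcept_add 0 x).symm
  rw [split, add_re, ofReal_re]

lemma hasDerivAt_re_weierstrassP {x : ℝ} (hx : (x : ℂ) ∉ L.lattice) :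
    HasDerivAt (fun x : ℝ => (℘[L] x).re) (℘'[L] x).re x :=
  (hasDerivAt_weierstrassP hx).real_of_complex

lemma g₃_ne_zero_of_g₂_eq_zero (h : L.g₂ = 0) : L.g₃ ≠ 0 := by
  intro h₃
  have ode : ∀ z ∉ L.lattice, ℘'[L] z ^ 2 = 4 * ℘[L] z ^ 3 := fun z hz => by
    rw [L.derivWeierstrassP_sq z hz, h, h₃]
    ring
  set w := L.ω₁ / 2
  have hw : w ∉ L.lattice := L.ω₁_div_two_notMem_lattice
  have deriv_zero : ℘'[L] w = 0 := derivWeierstrassP_eq_zero_of_two_mul_mem <| by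
    simpa [w, mul_div_cancel₀] using L.ω₁_mem_lattice
  have zero : ℘[L] w = 0 := by simpa [deriv_zero] using ode w hw
  have analytic : AnalyticAt ℂ ℘[L] w := L.analyticOnNhd_weierstrassP w hw
  have order_ne_zero : meromorphicOrderAt ℘[L] w ≠ 0 :=
    analytic.meromorphicNFAt.meromorphicOrderAt_eq_zero_iff.not.2 (not_not.2 zero)
  have order_eq := meromorphicOrderAt_eq_neg_two_of_deriv_sq_eq (c := 4) (by norm_num)
    analytic.meromorphicAt ((eventually_notMem_lattice hw).filter_mono nhdsWithin_le_nhds |>.mono <|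
      by simpa only [L.deriv_weierstrassP] using ode)
    order_ne_zero (meromorphicOrderAt_weierstrassP_ne_top w)
  have := order_eq ▸ analytic.meromorphicOrderAt_nonneg
  exact absurd this (by decide)

lemma tsum_lattice_comp_equiv (e : ℂ ≃ ℂ) (he : ∀ l, e l ∈ L.lattice ↔ l ∈ L.lattice)
    (F : ℂ → ℂ) : ∑' l : L.lattice, F (e l) = ∑' l : L.lattice, F l :=
  (e.subtypeEquiv fun l => (he l).symm).tsum_eq fun l : L.lattice => F l

section Multiplier

variable {c : ℂ} (hc : c ≠ 0) (hcL : ∀ l, c * l ∈ L.lattice ↔ l ∈ L.lattice)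

include hc hcL

lemma weierstrassP_mul (z : ℂ) : ℘[L] (c * z) = (c ^ 2)⁻¹ * ℘[L] z := by
  rw [PeriodPair.weierstrassP, PeriodPair.weierstrassP, ← tsum_mul_left,
    ← tsum_lattice_comp_equiv (Equiv.mulLeft₀ c hc) hcL fun l => 1 / (c * z - l) ^ 2 - 1 / l ^ 2]
  refine tsum_congr fun l => ?_
  simp only [Equiv.mulLeft₀_apply, ← mul_sub, mul_pow, one_div, mul_inv]

lemma G_eq_zero_of_pow_ne_one {n : ℕ} (hcn : c ^ n ≠ 1) : L.G n = 0 := by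
  have homogeneous : L.G n = (c ^ n)⁻¹ * L.G n := by
    rw [PeriodPair.G, ← tsum_mul_left,
      ← tsum_lattice_comp_equiv (Equiv.mulLeft₀ c hc) hcL fun l => (l ^ n)⁻¹]
    simp only [Equiv.mulLeft₀_apply, mul_pow, mul_inv]
  by_contra hG
  exact hcn (inv_eq_one.1 (mul_right_cancel₀ hG (by rw [one_mul, ← homogeneous])))

lemma weierstrassP_eq_zero_of_mul_sub_mem (hc2 : c ^ 2 ≠ 1) {z : ℂ}
    (hz : c * z - z ∈ L.lattice) : ℘[L] z = 0 := by
  have invariant : ℘[L] z = (c ^ 2)⁻¹ * ℘[L] z := by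
    rw [← weierstrassP_mul hc hcL, ← L.weierstrassP_add_coe z ⟨_, hz⟩, add_sub_cancel]
  by_contra h0
  exact hc2 (inv_eq_one.1 (mul_right_cancel₀ h0 (by rw [one_mul, ← invariant])))

end Multiplier

section RealLattice

variable (hL : ∀ l, conj l ∈ L.lattice ↔ l ∈ L.lattice)

include hL

lemma conj_weierstrassP (z : ℂ) : conj (℘[L] z) = ℘[L] (conj z) := by
  rw [PeriodPair.weierstrassP, PeriodPair.weierstrassP, conj_tsum,
    ← tsum_lattice_comp_equiv starRingAut.toEquiv hL fun l => 1 / (conj z - l) ^ 2 - 1 / l ^ 2]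
  refine tsum_congr fun l => ?_
  rw [map_sub, map_div₀, map_div₀, map_pow, map_pow, map_sub, map_one]
  rfl

lemma conj_derivWeierstrassP (z : ℂ) : conj (℘'[L] z) = ℘'[L] (conj z) := by
  rw [PeriodPair.derivWeierstrassP, PeriodPair.derivWeierstrassP, map_neg, conj_tsum,
    ← tsum_lattice_comp_equiv starRingAut.toEquiv hL fun l => 2 / (conj z - l) ^ 3]
  congr 1
  refine tsum_congr fun l => ?_
  rw [map_div₀, map_pow, map_sub, conj_ofNat]
  rfl

lemma ofReal_re_weierstrassP (x : ℝ) : ((℘[L] x).re : ℂ) = ℘[L] x :=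
  conj_eq_iff_re.1 (by rw [conj_weierstrassP hL, conj_ofReal])

lemma ofReal_re_derivWeierstrassP (x : ℝ) : ((℘'[L] x).re : ℂ) = ℘'[L] x :=
  conj_eq_iff_re.1 (by rw [conj_derivWeierstrassP hL, conj_ofReal])

lemma re_derivWeierstrassP_eq_zero_of_add_conj_mem {z : ℂ} (hz : z + conj z ∈ L.lattice) :
    (℘'[L] z).re = 0 := by
  have conj_eq_neg : conj (℘'[L] z) = -℘'[L] z := by
    rw [conj_derivWeierstrassP hL, ← L.derivWeierstrassP_neg,
      ← L.derivWeierstrassP_add_coe (-z) ⟨_, hz⟩, neg_add_cancel_left]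
  have := congrArg re conj_eq_neg
  rw [conj_re, neg_re] at this
  linarith

lemma hasDerivAt_re_derivWeierstrassP (h₂ : L.g₂ = 0) {x : ℝ} (hx : (x : ℂ) ∉ L.lattice) :
    HasDerivAt (fun x : ℝ => (℘'[L] x).re) (6 * (℘[L] x).re ^ 2) x := by
  refine (hasDerivAt_derivWeierstrassP hx).real_of_complex.congr_deriv ?_
  rw [h₂, zero_div, sub_zero, ← ofReal_re_weierstrassP hL]
  norm_cast

lemma re_derivWeierstrassP_sq (h₂ : L.g₂ = 0) {g : ℝ} (h₃ : L.g₃ = g) {x : ℝ}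
    (hx : (x : ℂ) ∉ L.lattice) : (℘'[L] x).re ^ 2 = 4 * (℘[L] x).re ^ 3 - g := by
  have ode := L.derivWeierstrassP_sq x hx
  rw [h₂, h₃, zero_mul, sub_zero, ← ofReal_re_weierstrassP hL,
    ← ofReal_re_derivWeierstrassP hL] at ode
  exact_mod_cast ode

lemma beta_eq_three_mul_of_isLeast_period (h₂ : L.g₂ = 0) {g ϖ : ℝ} (hg : 0 < g)
    (h₃ : L.g₃ = g) (hϖ : IsLeast {x : ℝ | 0 < x ∧ (x : ℂ) ∈ L.lattice} ϖ) :
    ProbabilityTheory.beta (1 / 6) (1 / 2) = 3 * (g / 4) ^ (1 / 6 : ℝ) * ϖ := by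
  obtain ⟨⟨ϖ_pos, ϖ_mem⟩, least⟩ := hϖ
  have half_lt : ϖ / 2 < ϖ := half_lt_self ϖ_pos
  have notMem : ∀ x ∈ Ioc 0 (ϖ / 2), (x : ℂ) ∉ L.lattice := fun x hx mem =>
    (hx.2.trans_lt half_lt).not_ge (least ⟨hx.1, mem⟩)
  have half_mem : ϖ / 2 ∈ Ioc 0 (ϖ / 2) := right_mem_Ioc.2 (half_pos ϖ_pos)
  have deriv_half : (℘'[L] (ϖ / 2 : ℝ)).re = 0 := by
    rw [derivWeierstrassP_eq_zero_of_two_mul_mem, zero_re]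
    rwa [← ofReal_ofNat, ← ofReal_mul, mul_div_cancel₀ _ two_ne_zero]
  have deriv₂ : ∀ x ∈ Ioc 0 (ϖ / 2),
      HasDerivAt (fun x : ℝ => (℘'[L] x).re) (6 * (℘[L] x).re ^ 2) x := fun x hx =>
    hasDerivAt_re_derivWeierstrassP hL h₂ (notMem x hx)
  have ode : ∀ x ∈ Ioo 0 (ϖ / 2), (℘'[L] x).re ^ 2 = 4 * (℘[L] x).re ^ 3 - g := fun x hx =>
    re_derivWeierstrassP_sq hL h₂ h₃ (notMem x (Ioo_subset_Ioc_self hx))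
  have lim_half : Tendsto (fun x : ℝ => (℘'[L] x).re) (𝓝[<] (ϖ / 2)) (𝓝 0) :=
    deriv_half ▸ (deriv₂ _ half_mem).continuousAt.tendsto.mono_left nhdsWithin_le_nhds
  rw [beta_eq_six_mul_of_deriv_sq_eq (half_pos ϖ_pos) hg
    (fun x hx => hasDerivAt_re_weierstrassP (notMem x (Ioo_subset_Ioc_self hx))) ode
    (deriv_neg_of_deriv_sq_eq hg.ne' deriv₂ ode deriv_half) tendsto_re_weierstrassP_atTop lim_half]
  ring

end RealLattice

end Weierstrass

section HexagonalLattice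

open Set ComplexConjugate
open scoped PeriodPair

lemma τ_eq : τ = ⟨1 / 2, √3 / 2⟩ := by
  rw [τ, mul_div_right_comm, ← ofReal_ofNat, ← ofReal_div, exp_mul_I, ← ofReal_cos, ← ofReal_sin,
    Real.cos_pi_div_three, Real.sin_pi_div_three]
  apply Complex.ext <;> simp

lemma τ_sq : τ ^ 2 = τ - 1 := by
  have sq_three : √(3 : ℝ) * √3 = 3 := Real.mul_self_sqrt three_pos.le
  rw [τ_eq]
  apply Complex.ext
  · norm_num [sq, div_mul_div_comm, sq_three]
  · simp only [one_div, sq, mul_im, sub_im, one_im, sub_zero]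
    ring

lemma conj_τ : conj τ = 1 - τ := by
  rw [τ_eq]
  apply Complex.ext
  · norm_num
  · simp

lemma τ_ne_zero : τ ≠ 0 := exp_ne_zero _

lemma τ_pow_four_ne_one : τ ^ 4 ≠ 1 := by
  have τ_pow_four : τ ^ 4 = -τ := by linear_combination (τ ^ 2 + τ) * τ_sq
  intro h
  have := congrArg re (τ_pow_four.symm.trans h)
  norm_num [τ_eq] at this

lemma ϖ₀_pos : 0 < ϖ₀ :=
  div_pos (pow_pos (Real.Gamma_pos_of_pos (by norm_num)) 3) Real.two_pi_pos

/-- The period pair `(ϖ, τϖ)`, which gives access to the library's `℘`-function and invariants of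
the hexagonal lattice `hexLattice ϖ`. -/
def hexPeriodPair (ϖ : ℝ) (hϖ : 0 < ϖ) : PeriodPair where
  ω₁ := ϖ
  ω₂ := τ * ϖ
  indep := by
    rw [LinearIndependent.pair_iff]
    intro s t h
    have t_zero : t = 0 := by simpa [τ_eq, hϖ.ne'] using congrArg im h
    have s_zero : s = 0 := by simpa [t_zero, hϖ.ne'] using congrArg re h
    exact ⟨s_zero, t_zero⟩

variable {ϖ : ℝ} (hϖ : 0 < ϖ)

local notation "Λ" => hexPeriodPair ϖ hϖ

lemma mem_hexPeriodPair_lattice (z : ℂ) : z ∈ (Λ).lattice ↔ z ∈ hexLattice ϖ := by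
  simp only [PeriodPair.mem_lattice, hexLattice, mem_range, Prod.exists, hexPt, hexPeriodPair,
    mul_assoc]

lemma latticeEquivProd_symm_hexPeriodPair (p : ℤ × ℤ) :
    ((Λ).latticeEquivProd.symm p : ℂ) = hexPt ϖ p := by
  rw [PeriodPair.latticeEquiv_symm_apply, hexPt, mul_assoc]
  rfl

lemma weierstrassP_hexPeriodPair (z : ℂ) :
    ℘[Λ] z = 1 / z ^ 2 +
      ∑' p : {p : ℤ × ℤ // p ≠ 0}, (1 / (z - hexPt ϖ p) ^ 2 - 1 / hexPt ϖ p ^ 2) := by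
  have sum := (Λ).latticeEquivProd.symm.toEquiv.hasSum_iff.2 ((Λ).hasSum_weierstrassP z)
  simp only [Function.comp_def, LinearEquiv.coe_toEquiv, latticeEquivProd_symm_hexPeriodPair]
    at sum
  rw [← sum.tsum_eq, ← sum.summable.tsum_subtype_add_tsum_subtype_compl {0}]
  refine congrArg₂ (· + ·) ?_ rfl
  rw [tsum_singleton (0 : ℤ × ℤ) fun p => 1 / (z - hexPt ϖ p) ^ 2 - 1 / hexPt ϖ p ^ 2]
  simp [hexPt]

lemma τ_mul_mem_hexPeriodPair_lattice_iff (l : ℂ) : τ * l ∈ (Λ).lattice ↔ l ∈ (Λ).lattice := by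
  have mul_mem : ∀ l ∈ (Λ).lattice, τ * l ∈ (Λ).lattice := by
    simp only [mem_hexPeriodPair_lattice, hexLattice, forall_mem_range]
    refine fun p => ⟨(-p.2, p.1 + p.2), ?_⟩
    simp only [hexPt]
    push_cast
    linear_combination -(p.2 * ϖ : ℂ) * τ_sq
  refine ⟨fun h => ?_, mul_mem l⟩
  have eq_sub : l = τ * l - τ * (τ * l) := by linear_combination l * τ_sq
  rw [eq_sub]
  exact sub_mem h (mul_mem _ h)

lemma conj_mem_hexPeriodPair_lattice_iff (l : ℂ) : conj l ∈ (Λ).lattice ↔ l ∈ (Λ).lattice := by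
  have conj_mem : ∀ l ∈ (Λ).lattice, conj l ∈ (Λ).lattice := by
    simp only [mem_hexPeriodPair_lattice, hexLattice, forall_mem_range]
    refine fun p => ⟨(p.1 + p.2, -p.2), ?_⟩
    simp only [hexPt, map_add, map_mul, conj_τ, conj_ofReal, map_intCast]
    push_cast
    ring
  exact ⟨fun h => conj_conj l ▸ conj_mem _ h, conj_mem l⟩

lemma isLeast_hexPeriodPair_real_period :
    IsLeast {x : ℝ | 0 < x ∧ (x : ℂ) ∈ (Λ).lattice} ϖ := by
  refine ⟨⟨hϖ, (Λ).ω₁_mem_lattice⟩, ?_⟩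
  rintro x ⟨x_pos, x_mem⟩
  obtain ⟨⟨m, n⟩, h⟩ := (mem_hexPeriodPair_lattice hϖ x).1 x_mem
  have n_zero : n = 0 := by simpa [hexPt, τ_eq, hϖ.ne'] using congrArg im h
  have x_eq : m * ϖ = x := by simpa [hexPt, n_zero] using congrArg re h
  have m_pos : 0 < m := by exact_mod_cast pos_of_mul_pos_left (x_eq ▸ x_pos) hϖ.le
  rw [← x_eq]
  exact le_mul_of_one_le_left hϖ.le (by exact_mod_cast m_pos)

lemma g₂_hexPeriodPair : (Λ).g₂ = 0 := by
  rw [PeriodPair.g₂, G_eq_zero_of_pow_ne_one τ_ne_zero (τ_mul_mem_hexPeriodPair_lattice_iff hϖ)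
    τ_pow_four_ne_one, mul_zero]

lemma exists_pos_g₃_hexPeriodPair : ∃ g : ℝ, 0 < g ∧ (Λ).g₃ = g := by
  set z : ℂ := (1 + τ) * ϖ / 3
  have z_notMem : z ∉ (Λ).lattice := by
    have := (PeriodPair.mul_ω₁_add_mul_ω₂_mem_lattice (L := Λ) (α := 1 / 3) (β := 1 / 3)).not.2
      (by norm_num)
    convert this using 2
    simp only [one_div, Rat.cast_inv, Rat.cast_ofNat, hexPeriodPair, z]
    ring
  have zero : ℘[Λ] z = 0 := by
    refine weierstrassP_eq_zero_of_mul_sub_mem (pow_ne_zero 2 τ_ne_zero) (fun l => ?_)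
      (by rw [← pow_mul]; exact τ_pow_four_ne_one) ?_
    · rw [sq, mul_assoc, τ_mul_mem_hexPeriodPair_lattice_iff, τ_mul_mem_hexPeriodPair_lattice_iff]
    · have rotate : τ ^ 2 * z - z = -ϖ := by
        linear_combination (1 + τ) * ϖ / 3 * τ_sq + ϖ / 3 * τ_sq
      rw [rotate]
      exact neg_mem (Λ).ω₁_mem_lattice
  have re_zero : (℘'[Λ] z).re = 0 := by
    refine re_derivWeierstrassP_eq_zero_of_add_conj_mem (conj_mem_hexPeriodPair_lattice_iff hϖ) ?_
    have reflect : z + conj z = ϖ := by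
      simp only [z, map_div₀, map_mul, map_add, map_one, conj_τ, conj_ofReal, map_ofNat]
      ring
    rw [reflect]
    exact (Λ).ω₁_mem_lattice
  have g₃_eq : (Λ).g₃ = ((℘'[Λ] z).im ^ 2 : ℝ) := by
    have ode := (Λ).derivWeierstrassP_sq z z_notMem
    rw [zero, ← re_add_im (℘'[Λ] z), re_zero, ofReal_zero, zero_add, mul_pow, I_sq] at ode
    push_cast
    linear_combination ode
  refine ⟨_, (sq_nonneg _).lt_of_ne fun h => ?_, g₃_eq⟩
  exact g₃_ne_zero_of_g₂_eq_zero (g₂_hexPeriodPair hϖ) (by rw [g₃_eq, ← h, ofReal_zero])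

lemma g₃_hexPeriodPair_ϖ₀ : (hexPeriodPair ϖ₀ ϖ₀_pos).g₃ = 1 := by
  obtain ⟨g, g_pos, g₃_eq⟩ := exists_pos_g₃_hexPeriodPair ϖ₀_pos
  have periods := beta_eq_three_mul_of_isLeast_period (conj_mem_hexPeriodPair_lattice_iff ϖ₀_pos)
    (g₂_hexPeriodPair ϖ₀_pos) g_pos g₃_eq (isLeast_hexPeriodPair_real_period ϖ₀_pos)
  rw [beta_one_sixth_one_half] at periods
  have rpow_eq : (1 / 4 : ℝ) ^ (1 / 6 : ℝ) = (g / 4) ^ (1 / 6 : ℝ) :=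
    mul_left_cancel₀ three_ne_zero (mul_right_cancel₀ ϖ₀_pos.ne' periods)
  have g_eq : 1 / 4 = g / 4 :=
    (Real.rpow_left_inj (by norm_num) (by positivity) (by norm_num)).1 rpow_eq
  rw [g₃_eq, ← (div_left_inj' four_ne_zero).1 g_eq, ofReal_one]

lemma wp_eq_weierstrassP : wp = ℘[hexPeriodPair ϖ₀ ϖ₀_pos] :=
  funext fun z => (weierstrassP_hexPeriodPair ϖ₀_pos z).symm

lemma deriv_wp_sq {z : ℂ} (hz : z ∉ hexLattice ϖ₀) : deriv wp z ^ 2 = 4 * wp z ^ 3 - 1 := by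
  rw [← mem_hexPeriodPair_lattice ϖ₀_pos] at hz
  rw [wp_eq_weierstrassP, PeriodPair.deriv_weierstrassP, PeriodPair.derivWeierstrassP_sq _ z hz,
    g₂_hexPeriodPair, g₃_hexPeriodPair_ϖ₀, zero_mul, sub_zero]

lemma wp_neg (z : ℂ) : wp (-z) = wp z := by
  rw [wp_eq_weierstrassP, PeriodPair.weierstrassP_neg]

lemma deriv_wp_neg (z : ℂ) : deriv wp (-z) = -deriv wp z := by
  rw [wp_eq_weierstrassP, PeriodPair.deriv_weierstrassP, PeriodPair.derivWeierstrassP_neg]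

end HexagonalLattice

/-- `X(z) = (℘'(z) + √3)/(2√3 ℘(z))`, `Y(z) = (℘'(−z) + √3)/(2√3 ℘(−z))`
satisfy `X³ + Y³ = 1` wherever defined, uniformizing the Fermat cubic. -/
theorem fermat_cubic_uniformization (z : ℂ) (hz : z ∉ hexLattice ϖ₀)
    (h0 : wp z ≠ 0) (h0' : wp (-z) ≠ 0) :
    ((deriv wp z + (Real.sqrt 3 : ℂ)) / (2 * (Real.sqrt 3 : ℂ) * wp z)) ^ 3
      + ((deriv wp (-z) + (Real.sqrt 3 : ℂ)) / (2 * (Real.sqrt 3 : ℂ) * wp (-z))) ^ 3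
      = 1 := by
  have sqrt_three_sq : (√3 : ℂ) ^ 2 = 3 := by
    exact_mod_cast congrArg ofReal (Real.sq_sqrt three_pos.le)
  have sqrt_three_ne_zero : (√3 : ℂ) ≠ 0 := ofReal_ne_zero.2 (Real.sqrt_pos.2 three_pos).ne'
  rw [wp_neg, deriv_wp_neg]
  exact div_pow_three_add_div_pow_three_eq_one two_ne_zero sqrt_three_ne_zero h0 sqrt_three_sq
    (deriv_wp_sq hz)
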